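/- Let l and m be fixed positive integers. There exists a constant C > 0 such that for every integer k with k ≥ 2 and k > l, and every integer r with r ≥ k + m, the number of tuples a ∈ A_{k,l,m} whose associated polynomial satisfies p_a(r) = 0 is at most C. -/

import Mathlib

noncomputable section

/-- The falling factorial `(x)_j = x (x-1) ⋯ (x-j+1)`, with `(x)_0 = 1`. -/
def fall (x : ℤ) (j : ℕ) : ℤ := ∏ i ∈ Finset.range j, (x - (i : ℤ))

/-- `a ∈ A_{k,l,m}`: an `(l+1)`-tuple of nonnegative integers with
`∑_{j=0}^{l} (j+m) a_j = k + m`. -/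
def memA (k l m : ℕ) (a : Fin (l + 1) → ℕ) : Prop :=
  ∑ j : Fin (l + 1), ((j : ℕ) + m) * a j = k + m

/-- The polynomial
`p_a(x) = (x-m)_k - (-1)^k (k+m-1)_{k-l} ∑_{j=0}^{l} (-1)^j a_j (l+m-1)_{l-j} (x-m)_j`
associated to `a ∈ A_{k,l,m}`. -/
def pA (k l m : ℕ) (a : Fin (l + 1) → ℕ) (x : ℤ) : ℤ :=
  fall (x - (m : ℤ)) k -
    (-1 : ℤ) ^ k * fall ((k : ℤ) + (m : ℤ) - 1) (k - l) *
      ∑ j : Fin (l + 1), (-1 : ℤ) ^ (j : ℕ) * (a j : ℤ) * fall ((l : ℤ) + (m : ℤ) - 1) (l - (j : ℕ))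
        * fall (x - (m : ℤ)) (j : ℕ)

/-!
Fix `r` and write `p_a(r) = (r - m)_k - ∑ w_j a_j`. Consecutive weights satisfy
`w_j (r - m - j) = -(m + j) w_{j+1}`, so `|w_i| (k + m) ≤ M |w_j|` for `i < j`, with `M` depending
only on `l` and `m`. The entries of `a ∈ A_{k,l,m}` are at most `k + m`. Hence, if `a` and `b` give
the same value and `j` is the last index at which they may differ, then `|a_j - b_j|` is at most
`(l + 1) M`. A tuple is thus determined by its residues modulo `(l + 1) M + 1`.
-/

section DominatedWeights

lemma mul_le_pow_mul_of_mul_le_mul_succ {R : Type*} [CommSemiring R] [PartialOrder R]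
    [IsOrderedRing R] {u : ℕ → R} {N M : R} {l : ℕ} (hu : ∀ j ≤ l, 0 ≤ u j) (hN : 1 ≤ N)
    (hM : 0 ≤ M) (hsucc : ∀ j < l, N * u j ≤ M * u (j + 1)) (i d : ℕ) (hd : i + d < l) :
    N * u i ≤ M ^ (d + 1) * u (i + d + 1) := by
  induction d with
  | zero => simpa using hsucc i hd
  | succ d ih =>
    have hnonneg : 0 ≤ u (i + d + 1) := hu _ (by omega)
    calc N * u i ≤ M ^ (d + 1) * u (i + d + 1) := ih (by omega)
      _ ≤ M ^ (d + 1) * (N * u (i + d + 1)) := by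
        gcongr
        exact le_mul_of_one_le_left hnonneg hN
      _ ≤ M ^ (d + 1) * (M * u (i + d + 1 + 1)) := by
        gcongr ?_ * ?_
        exact hsucc _ hd
      _ = M ^ (d + 1 + 1) * u (i + (d + 1) + 1) := by ring_nf

variable {ι : Type*} [Fintype ι] [LinearOrder ι] {w : ι → ℤ} {N M : ℕ}

lemma eq_zero_of_sum_mul_eq_zero_of_dvd (hw : ∀ i, w i ≠ 0)
    (hdom : ∀ i j, i < j → N * |w i| ≤ M * |w j|) {z : ι → ℤ} (hz : ∀ i, |z i| ≤ N)
    (hsum : ∑ i, w i * z i = 0) {q : ℕ} (hq : Fintype.card ι * M < q) (hdvd : ∀ i, (q : ℤ) ∣ z i) :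
    z = 0 := by
  funext j
  induction j using WellFoundedGT.induction with
  | ind j hgt =>
    have hterm : ∀ i ∈ Finset.univ.erase j, |w i * z i| ≤ M * |w j| := by
      intro i hi
      rcases lt_or_gt_of_ne (Finset.ne_of_mem_erase hi) with hij | hji
      · calc |w i * z i| = |z i| * |w i| := by rw [abs_mul, mul_comm]
          _ ≤ N * |w i| := by gcongr; exact hz i
          _ ≤ M * |w j| := hdom i j hij
      · rw [hgt i hji, Pi.zero_apply, mul_zero, abs_zero]
        positivity
    have hsplit : w j * z j = -∑ i ∈ Finset.univ.erase j, w i * z i :=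
      eq_neg_of_add_eq_zero_left <|
        (Finset.add_sum_erase _ (fun i => w i * z i) (Finset.mem_univ j)).trans hsum
    have hle : |z j| * |w j| ≤ (Fintype.card ι * M : ℕ) * |w j| :=
      calc |z j| * |w j| = |∑ i ∈ Finset.univ.erase j, w i * z i| := by
            rw [← abs_mul, mul_comm, hsplit, abs_neg]
        _ ≤ ∑ i ∈ Finset.univ.erase j, |w i * z i| := Finset.abs_sum_le_sum_abs _ _
        _ ≤ (Finset.univ.erase j).card • (M * |w j|) := Finset.sum_le_card_nsmul _ _ _ hterm
        _ ≤ Fintype.card ι • (M * |w j|) := by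
            gcongr
            exact Finset.card_le_univ _
        _ = (Fintype.card ι * M : ℕ) * |w j| := by rw [nsmul_eq_mul, Nat.cast_mul, mul_assoc]
    have hlt : |z j| < q :=
      (le_of_mul_le_mul_right hle (abs_pos.2 (hw j))).trans_lt (by exact_mod_cast hq)
    exact Int.eq_zero_of_abs_lt_dvd (hdvd j) hlt

lemma card_le_of_sum_mul_eq (hw : ∀ i, w i ≠ 0)
    (hdom : ∀ i j, i < j → N * |w i| ≤ M * |w j|) {S : Set (ι → ℕ)} (hS : ∀ a ∈ S, ∀ i, a i ≤ N)
    {c : ℤ} (hc : ∀ a ∈ S, ∑ i, w i * a i = c) :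
    Nat.card S ≤ (Fintype.card ι * M + 1) ^ Fintype.card ι := by
  let residues : S → ι → ZMod (Fintype.card ι * M + 1) := fun a i => (a : ι → ℕ) i
  have hinj : residues.Injective := by
    intro a b hab
    have hdiff : (fun i => (a.1 i : ℤ) - b.1 i) = 0 := by
      refine eq_zero_of_sum_mul_eq_zero_of_dvd hw hdom (fun i => ?_) ?_ (Nat.lt_succ_self _)
        fun i => ?_
      · have ha := hS a a.2 i
        have hb := hS b b.2 i
        rw [abs_le]
        omega
      · simp only [mul_sub, Finset.sum_sub_distrib, hc a a.2, hc b b.2, sub_self]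
      · exact Nat.modEq_iff_dvd.1 ((ZMod.natCast_eq_natCast_iff _ _ _).1 (congrFun hab i).symm)
    ext i
    exact_mod_cast sub_eq_zero.1 (congrFun hdiff i)
  simpa using Nat.card_le_card_of_injective residues hinj

end DominatedWeights

lemma fall_succ (x : ℤ) (j : ℕ) : fall x (j + 1) = fall x j * (x - j) :=
  Finset.prod_range_succ _ _

lemma fall_pos {x : ℤ} {j : ℕ} (h : (j : ℤ) ≤ x) : 0 < fall x j :=
  Finset.prod_pos fun i hi => by
    have := Finset.mem_range.1 hi
    omega

lemma memA.apply_le {k l m : ℕ} (hm : 0 < m) {a : Fin (l + 1) → ℕ} (ha : memA k l m a)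
    (i : Fin (l + 1)) : a i ≤ k + m :=
  calc a i ≤ ((i : ℕ) + m) * a i := Nat.le_mul_of_pos_left _ (by omega)
    _ ≤ ∑ j : Fin (l + 1), ((j : ℕ) + m) * a j :=
      Finset.single_le_sum (f := fun j : Fin (l + 1) => ((j : ℕ) + m) * a j)
        (fun _ _ => Nat.zero_le _) (Finset.mem_univ i)
    _ = k + m := ha

/-- The weight `w_j` of the entry `a_j` in `p_a(r) = (r - m)_k - ∑ j, w_j a_j`. -/
def pAWeight (k l m : ℕ) (r : ℤ) (j : ℕ) : ℤ :=
  (-1) ^ k * fall ((k : ℤ) + m - 1) (k - l) *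
    ((-1) ^ j * fall ((l : ℤ) + m - 1) (l - j) * fall (r - m) j)

lemma pA_eq_sub_sum_pAWeight (k l m : ℕ) (a : Fin (l + 1) → ℕ) (r : ℤ) :
    pA k l m a r = fall (r - m) k - ∑ j : Fin (l + 1), pAWeight k l m r j * a j := by
  simp only [pA, pAWeight, Finset.mul_sum]
  congr 1
  exact Finset.sum_congr rfl fun j _ => by ring

section Weight

variable {k l m : ℕ} {r : ℤ}

lemma pAWeight_ne_zero (hm : 0 < m) (hr : (l : ℤ) + m ≤ r) {j : ℕ} (hj : j ≤ l) :
    pAWeight k l m r j ≠ 0 := by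
  have hfall_k : fall ((k : ℤ) + m - 1) (k - l) ≠ 0 := (fall_pos (by omega)).ne'
  have hfall_l : fall ((l : ℤ) + m - 1) (l - j) ≠ 0 := (fall_pos (by omega)).ne'
  have hfall_r : fall (r - m) j ≠ 0 := (fall_pos (by omega)).ne'
  simp [pAWeight, hfall_k, hfall_l, hfall_r]

lemma pAWeight_mul_sub {j : ℕ} (hj : j < l) :
    pAWeight k l m r j * (r - m - j) = -((m + j) * pAWeight k l m r (j + 1)) := by
  obtain ⟨t, rfl⟩ := Nat.exists_eq_add_of_lt hj
  rw [pAWeight, pAWeight, fall_succ (r - m), show j + t + 1 - j = t + 1 by omega,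
    show j + t + 1 - (j + 1) = t by omega, fall_succ]
  push_cast
  ring

lemma mul_abs_pAWeight_le_succ (hk : l ≤ k) (hr : (k : ℤ) + m ≤ r) {j : ℕ} (hj : j < l) :
    ((k : ℤ) + m) * |pAWeight k l m r j| ≤ ((l : ℤ) + m + 1) ^ 2 * |pAWeight k l m r (j + 1)| := by
  have hpos : 0 < r - m - j := by omega
  have hrec : |pAWeight k l m r j| * (r - m - j) = (m + j) * |pAWeight k l m r (j + 1)| := by
    rw [← abs_of_pos hpos, ← abs_mul, pAWeight_mul_sub hj, abs_neg, abs_mul, abs_of_nonneg]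
    positivity
  have hlin : (k : ℤ) + m ≤ (l + m + 1) * (r - m - j) := by nlinarith
  calc ((k : ℤ) + m) * |pAWeight k l m r j|
      ≤ (l + m + 1) * (r - m - j) * |pAWeight k l m r j| := by gcongr
    _ = (l + m + 1) * ((m + j) * |pAWeight k l m r (j + 1)|) := by rw [← hrec]; ring
    _ ≤ (l + m + 1) * ((l + m + 1) * |pAWeight k l m r (j + 1)|) := by
      gcongr ?_ * (?_ * _)
      omega
    _ = (l + m + 1) ^ 2 * |pAWeight k l m r (j + 1)| := by ring

lemma mul_abs_pAWeight_le (hk : l ≤ k) (hr : (k : ℤ) + m ≤ r) {i j : ℕ} (hij : i < j)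
    (hj : j ≤ l) :
    ((k : ℤ) + m) * |pAWeight k l m r i| ≤ (((l : ℤ) + m + 1) ^ 2) ^ l * |pAWeight k l m r j| := by
  obtain ⟨d, rfl⟩ := Nat.exists_eq_add_of_lt hij
  calc ((k : ℤ) + m) * |pAWeight k l m r i|
      ≤ (((l : ℤ) + m + 1) ^ 2) ^ (d + 1) * |pAWeight k l m r (i + d + 1)| :=
        mul_le_pow_mul_of_mul_le_mul_succ (u := fun j => |pAWeight k l m r j|)
          (fun _ _ => abs_nonneg _) (by omega) (by positivity)
          (fun _ => mul_abs_pAWeight_le_succ hk hr) i d hj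
    _ ≤ (((l : ℤ) + m + 1) ^ 2) ^ l * |pAWeight k l m r (i + d + 1)| := by
        gcongr
        · exact one_le_pow₀ (by omega)
        · omega

end Weight

theorem count_large_root_general (l m : ℕ) (hm : 0 < m) :
    ∃ C : ℕ, 0 < C ∧ ∀ k : ℕ, l ≤ k → ∀ r : ℤ, (k : ℤ) + m ≤ r → ∀ c : ℤ,
      Nat.card {a : Fin (l + 1) → ℕ // memA k l m a ∧ pA k l m a r = c} ≤ C := by
  refine ⟨((l + 1) * ((l + m + 1) ^ 2) ^ l + 1) ^ (l + 1), by positivity, fun k hk r hr c => ?_⟩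
  have hdom (i j : Fin (l + 1)) (hij : i < j) : ((k + m : ℕ) : ℤ) * |pAWeight k l m r i| ≤
      (((l + m + 1) ^ 2) ^ l : ℕ) * |pAWeight k l m r j| := by
    exact_mod_cast mul_abs_pAWeight_le hk hr hij (Fin.is_le j)
  have hcard := card_le_of_sum_mul_eq (S := {a | memA k l m a ∧ pA k l m a r = c})
    (c := fall (r - m) k - c) (fun j => pAWeight_ne_zero hm (by omega) (Fin.is_le j)) hdom
    (fun a ha => ha.1.apply_le hm)
    (fun a ha => by rw [← ha.2, pA_eq_sub_sum_pAWeight, sub_sub_cancel])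
  rwa [Fintype.card_fin] at hcard

/-- For fixed `l, m`, and any `k ≥ 2` with `k > l` and any integer
`r ≥ k + m`, the number of `a ∈ A_{k,l,m}` with `p_a(r) = 0` is bounded by a constant
depending only on `l` and `m`. -/
theorem count_large_root
    (l m : ℕ) (hl : 0 < l) (hm : 0 < m) :
    ∃ C : ℕ, 0 < C ∧ ∀ k : ℕ, 2 ≤ k → l < k → ∀ r : ℤ, (k : ℤ) + m ≤ r →
      Nat.card {a : Fin (l + 1) → ℕ // memA k l m a ∧ pA k l m a r = 0} ≤ C := by
  obtain ⟨C, hC, hcard⟩ := count_large_root_general l m hm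
  exact ⟨C, hC, fun k _ hk r hr => hcard k hk.le r hr 0⟩
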